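/- arXiv:1810.00332 — 2 statements merged into one kernel-verified Lean document; each statement's English description precedes it below -/
import Mathlib

section
/- Let Y be an object of D^b(A-mod). Then Y lies in K^b(A-proj) (i.e. Y is a perfect complex) if and only if for every object X of D^b(A-mod) one has Hom_{D^b(A-mod)}(Y, Σ^i(X)) = 0 for all sufficiently large i. -/
/-!
STATEMENT 4. Let `Y` be an object of `D^b(A-mod)`.  Then `Y` lies in `K^b(A-proj)`
(i.e. `Y` is a perfect complex) if and only if for every object `X` of `D^b(A-mod)` one has
`Hom(Y, Σ^i X) = 0` for all sufficiently large `i`.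

Here `D^b(A-mod)` is realized inside the unbounded derived category `D(A-Mod)` as the full
subcategory of complexes with bounded, finitely generated cohomology, and `K^b(A-proj)` as
the full subcategory of perfect complexes, i.e. objects isomorphic to the image of a bounded
complex of finitely generated projective `A`-modules.
-/

open CategoryTheory Limits

/-- An object of the unbounded derived category of `A`-modules lies in (the essential image
of) `D^b(A-mod)` if its cohomology is finitely generated in each degree and vanishes in all
but finitely many degrees. -/
def isDb (A : Type) [Ring A] [HasDerivedCategory.{w} (ModuleCat.{0} A)]
    (X : DerivedCategory (ModuleCat.{0} A)) : Prop :=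
  (∀ n : ℤ, Module.Finite A ((DerivedCategory.homologyFunctor (ModuleCat.{0} A) n).obj X)) ∧
  (∃ a b : ℤ, ∀ n : ℤ, (n < a ∨ b < n) →
    IsZero ((DerivedCategory.homologyFunctor (ModuleCat.{0} A) n).obj X))

/-- An object of the unbounded derived category of `A`-modules lies in `K^b(A-proj)` if it is
isomorphic to a bounded complex of finitely generated projective `A`-modules. -/
def isPerf (A : Type) [Ring A] [HasDerivedCategory.{w} (ModuleCat.{0} A)]
    (X : DerivedCategory (ModuleCat.{0} A)) : Prop :=
  ∃ P : CochainComplex (ModuleCat.{0} A) ℤ,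
    (∀ n : ℤ, Projective (P.X n)) ∧ (∀ n : ℤ, Module.Finite A (P.X n)) ∧
    (∃ a b : ℤ, ∀ n : ℤ, (n < a ∨ b < n) → IsZero (P.X n)) ∧
    Nonempty (DerivedCategory.Q.obj P ≅ X)


section
open Pretriangulated
namespace PerfAux
variable {A : Type} [Ring A] [HasDerivedCategory.{w} (ModuleCat.{0} A)]

/-- Morphisms from a K-projective complex lift to chain maps. -/
lemma Q_map_surj (P L : CochainComplex (ModuleCat.{0} A) ℤ) [P.IsKProjective]
    (f : DerivedCategory.Q.obj P ⟶ DerivedCategory.Q.obj L) :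
    ∃ g : P ⟶ L, DerivedCategory.Q.map g = f := by
  obtain ⟨g, hg⟩ := (CochainComplex.IsKProjective.Qh_map_bijective P
    ((HomotopyCategory.quotient _ _).obj L)).surjective
    ((DerivedCategory.quotientCompQhIso _).hom.app P ≫ f ≫
      (DerivedCategory.quotientCompQhIso _).inv.app L)
  obtain ⟨g, rfl⟩ := (HomotopyCategory.quotient _ _).map_surjective g
  refine ⟨g, ?_⟩
  rw [← cancel_epi ((DerivedCategory.quotientCompQhIso _).hom.app P),
    ← DerivedCategory.quotientCompQhIso_hom_naturality, hg]
  simp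

lemma isKProj (P : CochainComplex (ModuleCat.{0} A) ℤ) (b : ℤ)
    (h1 : ∀ n, Projective (P.X n)) (h2 : ∀ n, b < n → IsZero (P.X n)) : P.IsKProjective := by
  have : P.IsStrictlyLE b := by
    rw [CochainComplex.isStrictlyLE_iff]; exact fun i hi => h2 i hi
  exact CochainComplex.isKProjective_of_projective P b

/-- Vanishing lemma. -/
lemma vanish (P : CochainComplex (ModuleCat.{0} A) ℤ) [P.IsKProjective] (a : ℤ)
    (hP : ∀ n, n < a → IsZero (P.X n)) (Z : DerivedCategory (ModuleCat.{0} A))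
    (hZ : ∀ i, a ≤ i → IsZero ((DerivedCategory.homologyFunctor _ i).obj Z))
    (f : DerivedCategory.Q.obj P ⟶ Z) : f = 0 := by
  have : Z.IsLE (a - 1) := by
    rw [DerivedCategory.isLE_iff]; exact fun i hi => hZ i (by lia)
  obtain ⟨K, hK, ⟨e⟩⟩ := Z.exists_iso_Q_obj_of_isLE (a - 1)
  obtain ⟨g, hg⟩ := Q_map_surj P K (f ≫ e.hom)
  have : g = 0 := by
    ext n : 1
    by_cases hn : n < a
    · exact (hP n hn).eq_of_src _ _
    · exact (K.isZero_of_isStrictlyLE (a - 1) n (by lia)).eq_of_tgt _ _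
  rw [← cancel_mono e.hom, ← hg, this]
  simp

lemma isPerf_of_iso {X Y : DerivedCategory (ModuleCat.{0} A)} (e : X ≅ Y) (h : isPerf A X) :
    isPerf A Y := by
  obtain ⟨P, h1, h2, h3, ⟨i⟩⟩ := h
  exact ⟨P, h1, h2, h3, ⟨i ≪≫ e⟩⟩

lemma isPerf_shift {X : DerivedCategory (ModuleCat.{0} A)} (h : isPerf A X) (m : ℤ) :
    isPerf A (X⟦m⟧) := by
  obtain ⟨P, h1, h2, ⟨a, b, h3⟩, ⟨i⟩⟩ := h
  refine ⟨P⟦m⟧, fun n => h1 (n + m), fun n => h2 (n + m), ⟨a - m, b - m, fun n hn =>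
    h3 (n + m) (by lia)⟩, ⟨(DerivedCategory.Q.commShiftIso m).app P ≪≫
      (shiftFunctor _ m).mapIso i⟩⟩

lemma isPerf_cone (T : Triangle (DerivedCategory (ModuleCat.{0} A))) (hT : T ∈ distTriang _)
    (h1 : isPerf A T.obj₁) (h2 : isPerf A T.obj₂) : isPerf A T.obj₃ := by
  obtain ⟨P, p1, p2, ⟨a, b, p3⟩, ⟨i⟩⟩ := h1
  obtain ⟨R, r1, r2, ⟨c, d, r3⟩, ⟨j⟩⟩ := h2
  have := isKProj P b p1 (fun n hn => p3 n (Or.inr hn))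
  obtain ⟨g, hg⟩ := Q_map_surj P R (i.hom ≫ T.mor₁ ≫ j.inv)
  let e (n : ℤ) : (CochainComplex.mappingCone g).X n ≅ P.X (n + 1) ⊞ R.X n :=
    HomologicalComplex.homotopyCofiber.XIsoBiprod g n (n + 1) rfl
  refine ⟨CochainComplex.mappingCone g, fun n => ?_, fun n => ?_,
    ⟨min a c - 1, max b d, fun n hn => ?_⟩, ?_⟩
  · have := p1 (n + 1)
    have := r1 n
    exact Projective.of_iso (e n).symm inferInstance
  · have := p2 (n + 1)
    have := r2 n
    exact Module.Finite.equiv (e n ≪≫ ModuleCat.biprodIsoProd _ _).symm.toLinearEquiv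
  · refine IsZero.of_iso ?_ (e n)
    rw [biprod_isZero_iff]
    exact ⟨p3 _ (by lia), r3 _ (by lia)⟩
  · exact ⟨Triangle.π₃.mapIso (isoTriangleOfIso₁₂ _ _
      (DerivedCategory.mappingCone_triangle_distinguished g) hT i j (by
        change DerivedCategory.Q.map g ≫ j.hom = i.hom ≫ T.mor₁
        rw [hg]; simp))⟩

lemma isPerf_mid (T : Triangle (DerivedCategory (ModuleCat.{0} A))) (hT : T ∈ distTriang _)
    (h1 : isPerf A T.obj₁) (h2 : isPerf A T.obj₃) : isPerf A T.obj₂ :=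
  isPerf_cone _ (inv_rot_of_distTriang _ hT) (isPerf_shift h2 (-1)) h1

lemma isPerf_single (n : ℤ) (P : ModuleCat.{0} A) [Projective P] [Module.Finite A P] :
    isPerf A ((DerivedCategory.singleFunctor _ n).obj P) := by
  refine ⟨(HomologicalComplex.single _ _ n).obj P, fun i => ?_, fun i => ?_, ⟨n, n, fun i hi => ?_⟩,
    ⟨Iso.refl _⟩⟩
  · by_cases h : i = n
    · exact Projective.of_iso (HomologicalComplex.singleObjXIsoOfEq (.up ℤ) n P i h).symm ‹_›
    · exact (HomologicalComplex.isZero_single_obj_X (.up ℤ) n P i h).projective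
  · by_cases h : i = n
    · exact Module.Finite.equiv
        (HomologicalComplex.singleObjXIsoOfEq (.up ℤ) n P i h).symm.toLinearEquiv
    · have := ModuleCat.subsingleton_of_isZero
        (HomologicalComplex.isZero_single_obj_X (.up ℤ) n P i h)
      infer_instance
  · exact HomologicalComplex.isZero_single_obj_X (.up ℤ) n P i (by lia)

/-- The connecting triangle for a short exact sequence, in degree `n`. -/
lemma triangle_single {S : ShortComplex (ModuleCat.{0} A)} (hS : S.ShortExact) (n : ℤ) :
    ∃ δ : (DerivedCategory.singleFunctor _ n).obj S.X₃ ⟶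
      ((DerivedCategory.singleFunctor _ n).obj S.X₁)⟦(1 : ℤ)⟧,
      Triangle.mk ((DerivedCategory.singleFunctor _ n).map S.f)
        ((DerivedCategory.singleFunctor _ n).map S.g) δ ∈ distTriang _ := by
  refine ⟨DerivedCategory.triangleOfSESδ
    (hS.map_of_exact (HomologicalComplex.single _ (ComplexShape.up ℤ) n)), ?_⟩
  exact DerivedCategory.triangleOfSES_distinguished
    (hS.map_of_exact (HomologicalComplex.single _ (ComplexShape.up ℤ) n))

lemma epi_aux {C : Type*} [Category* C] {X Y X' Y' : C} {x : X ⟶ Y} {b : Y ⟶ Y'} {a : X ⟶ X'}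
    {y : X' ⟶ Y'} (h : x ≫ b = a ≫ y) [IsIso a] [IsIso b] (hy : Epi y) : Epi x := by
  have : x = a ≫ y ≫ inv b := by
    rw [← Category.assoc, ← h, Category.assoc, IsIso.hom_inv_id, Category.comp_id]
  rw [this]
  infer_instance

noncomputable def shiftSingle (N : ModuleCat.{0} A) (n k l : ℤ) (h : k + l = n) :
    ((DerivedCategory.singleFunctor _ n).obj N)⟦k⟧ ≅ (DerivedCategory.singleFunctor _ l).obj N :=
  ((DerivedCategory.singleFunctors (ModuleCat.{0} A)).shiftIso k l n h).app N

/-- Projective cover of the top cohomology. -/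
lemma exists_cover (Y : DerivedCategory (ModuleCat.{0} A)) (n : ℤ)
    (h : Module.Finite A ((DerivedCategory.homologyFunctor (ModuleCat.{0} A) n).obj Y)) :
    ∃ (P : ModuleCat.{0} A) (_ : Projective P) (_ : Module.Finite A P)
      (f : (DerivedCategory.singleFunctor _ n).obj P ⟶ Y),
      Epi ((DerivedCategory.homologyFunctor _ n).map f) := by
  let K := DerivedCategory.Q.objPreimage Y
  let e : DerivedCategory.Q.obj K ≅ Y := DerivedCategory.Q.objObjPreimageIso Y
  let e' : K.homology n ≅ (DerivedCategory.homologyFunctor _ n).obj Y :=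
    ((DerivedCategory.homologyFunctorFactors _ n).app K).symm ≪≫
      (DerivedCategory.homologyFunctor _ n).mapIso e
  have hK : Module.Finite A (K.homology n) := Module.Finite.equiv e'.symm.toLinearEquiv
  obtain ⟨m, φ, hφ⟩ := Module.Finite.exists_fin' A (K.homology n)
  let P : ModuleCat.{0} A := ModuleCat.of A (Fin m → A)
  have hP : Projective P := (IsProjective.iff_projective _).1 inferInstance
  have hPf : Module.Finite A P := inferInstanceAs (Module.Finite A (Fin m → A))
  let p : P ⟶ K.homology n := ModuleCat.ofHom φ
  have hp : Epi p := (ModuleCat.epi_iff_surjective _).2 hφ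
  let q : P ⟶ K.cycles n := Projective.factorThru p (K.homologyπ n)
  have hq : q ≫ K.homologyπ n = p := Projective.factorThru_comp _ _
  let g : (HomologicalComplex.single _ (.up ℤ) n).obj P ⟶ K :=
    HomologicalComplex.mkHomFromSingle (q ≫ K.iCycles n) (by intros; simp)
  have hg : HomologicalComplex.homologyMap g n =
      (HomologicalComplex.singleObjHomologySelfIso (.up ℤ) n P).hom ≫ p := by
    rw [← cancel_epi (HomologicalComplex.homologyπ _ n), HomologicalComplex.homologyπ_naturality,
      HomologicalComplex.homologyπ_singleObjHomologySelfIso_hom_assoc, ← hq, ← Category.assoc]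
    congr 1
    rw [← cancel_mono (K.iCycles n)]
    simp [g, HomologicalComplex.mkHomFromSingle_f,
      HomologicalComplex.singleObjCyclesSelfIso_hom]
  have hg' : Epi (HomologicalComplex.homologyMap g n) := by
    rw [hg]; infer_instance
  refine ⟨P, hP, hPf, DerivedCategory.Q.map g ≫ e.hom, ?_⟩
  have : Epi ((DerivedCategory.homologyFunctor _ n).map (DerivedCategory.Q.map g)) := by
    exact epi_aux (DerivedCategory.homologyFunctorFactors_hom_naturality g n) hg'
  have h3 : (DerivedCategory.homologyFunctor _ n).map (DerivedCategory.Q.map g ≫ e.hom) =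
    (DerivedCategory.homologyFunctor _ n).map (DerivedCategory.Q.map g) ≫
      (DerivedCategory.homologyFunctor _ n).map e.hom := CategoryTheory.Functor.map_comp _ _ _
  have h4 : Epi ((DerivedCategory.homologyFunctor _ n).map (DerivedCategory.Q.map g ≫ e.hom)) := by
    rw [h3]; exact epi_comp _ _
  exact h4

/-- Finiteness is preserved in the middle of an exact sequence. -/
lemma finite_mid [IsNoetherianRing A] (S : ShortComplex (ModuleCat.{0} A)) (hS : S.Exact)
    (h1 : Module.Finite A S.X₁) (h3 : Module.Finite A S.X₃) : Module.Finite A S.X₂ := by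
  have hr : Module.Finite A (LinearMap.range S.f.hom) := inferInstance
  have hk : Function.Exact S.f.hom S.g.hom := (ShortComplex.ShortExact.moduleCat_exact_iff_function_exact S).1 hS
  have : IsNoetherian A S.X₂ := isNoetherian_of_range_eq_ker S.f.hom S.g.hom
    (LinearMap.exact_iff.1 hk).symm
  infer_instance

def V (Y : DerivedCategory (ModuleCat.{0} A)) (m : ℤ) : Prop :=
  ∀ (n : ℤ), n ≤ m → ∀ N : ModuleCat.{0} A, Module.Finite A N →
    ∀ f : Y ⟶ (DerivedCategory.singleFunctor _ n).obj N, f = 0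

lemma homology_single_zero (N : ModuleCat.{0} A) (n i : ℤ) (h : i ≠ n) :
    IsZero ((DerivedCategory.homologyFunctor _ i).obj
      ((DerivedCategory.singleFunctor _ n).obj N)) := by
  rcases lt_or_gt_of_ne h with h | h
  · exact DerivedCategory.isZero_of_isGE _ n i h
  · exact DerivedCategory.isZero_of_isLE _ n i h

lemma finite_zero {M : ModuleCat.{0} A} (h : IsZero M) : Module.Finite A M := by
  have := ModuleCat.subsingleton_of_isZero h
  infer_instance

lemma homology_single_finite (N : ModuleCat.{0} A) (n i : ℤ) [hN : Module.Finite A N] :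
    Module.Finite A ((DerivedCategory.homologyFunctor (ModuleCat.{0} A) i).obj
      ((DerivedCategory.singleFunctor (ModuleCat.{0} A) n).obj N)) := by
  by_cases h : i = n
  · subst h
    have hN' : Module.Finite A ((𝟭 (ModuleCat.{0} A)).obj N) := hN
    exact Module.Finite.equiv
      ((DerivedCategory.singleFunctorCompHomologyFunctorIso _ i).app N).symm.toLinearEquiv
  · exact finite_zero (homology_single_zero N n i h)

lemma base_case [IsNoetherianRing A] (Y : DerivedCategory (ModuleCat.{0} A)) (m : ℤ)
    (hV : V Y m)
    (h1 : ∀ i, Module.Finite A ((DerivedCategory.homologyFunctor (ModuleCat.{0} A) i).obj Y))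
    (h2 : ∀ i, i ≠ m + 1 → IsZero ((DerivedCategory.homologyFunctor (ModuleCat.{0} A) i).obj Y)) :
    isPerf A Y := by
  have : Y.IsLE (m + 1) := by
    rw [DerivedCategory.isLE_iff]; exact fun i hi => h2 i (by lia)
  have : Y.IsGE (m + 1) := by
    rw [DerivedCategory.isGE_iff]; exact fun i hi => h2 i (by lia)
  obtain ⟨M, ⟨e⟩⟩ := Y.exists_iso_singleFunctor_obj_of_isGE_of_isLE (m + 1)
  have hM : Module.Finite A M := by
    have := h1 (m + 1)
    exact Module.Finite.equiv ((DerivedCategory.homologyFunctor _ (m + 1)).mapIso e ≪≫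
      (DerivedCategory.singleFunctorCompHomologyFunctorIso _ (m + 1)).app M).toLinearEquiv
  refine isPerf_of_iso e.symm ?_
  suffices Projective M from isPerf_single _ _
  obtain ⟨k, φ, hφ⟩ := Module.Finite.exists_fin' A M
  let P : ModuleCat.{0} A := ModuleCat.of A (Fin k → A)
  have hP : Projective P := (IsProjective.iff_projective _).1 inferInstance
  have hPf : Module.Finite A P := inferInstanceAs (Module.Finite A (Fin k → A))
  let p : P ⟶ M := ModuleCat.ofHom φ
  have hp : Epi p := (ModuleCat.epi_iff_surjective _).2 hφ
  have hS : (ShortComplex.mk (kernel.ι p) p (kernel.condition p)).ShortExact :=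
    { exact := ShortComplex.exact_kernel p }
  have hK : Module.Finite A (kernel p : ModuleCat.{0} A) := by
    have : IsNoetherian A P := isNoetherian_of_isNoetherianRing_of_finite A P
    have := (ModuleCat.mono_iff_injective (kernel.ι p)).1 inferInstance
    exact Module.Finite.of_injective (kernel.ι p).hom this
  obtain ⟨δ, hδ⟩ := triangle_single hS (m + 1)
  have hδ0 : δ = 0 := by
    let i := shiftSingle (kernel p) (m + 1) 1 m (by lia)
    have := hV m le_rfl (kernel p) hK (e.hom ≫ δ ≫ i.hom)
    rw [← cancel_epi e.hom, ← cancel_mono i.hom]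
    simpa using this
  obtain ⟨s, hs⟩ := Triangle.coyoneda_exact₃ _ hδ (𝟙 _) (by
    rw [Category.id_comp]; exact hδ0)
  obtain ⟨s, rfl⟩ := (DerivedCategory.singleFunctor _ (m + 1)).map_surjective s
  have : s ≫ p = 𝟙 M := by
    apply (DerivedCategory.singleFunctor _ (m + 1)).map_injective
    rw [CategoryTheory.Functor.map_comp, CategoryTheory.Functor.map_id]
    exact hs.symm
  exact Retract.projective ⟨s, p, this⟩

lemma main_ind [IsNoetherianRing A] (m : ℤ) (t : ℕ) :
    ∀ (Y : DerivedCategory (ModuleCat.{0} A)), V Y m →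
    (∀ i, Module.Finite A ((DerivedCategory.homologyFunctor (ModuleCat.{0} A) i).obj Y)) →
    (∀ i, (i < m + 1 ∨ m + 1 + t < i) →
      IsZero ((DerivedCategory.homologyFunctor (ModuleCat.{0} A) i).obj Y)) → isPerf A Y := by
  induction t with
  | zero => exact fun Y hV h1 h2 => base_case Y m hV h1 (fun i hi => h2 i (by simp; lia))
  | succ t ih =>
    intro Y hV h1 h2
    push_cast at h2
    obtain ⟨n, hn⟩ : ∃ n : ℤ, n = m + 1 + (t + 1) := ⟨_, rfl⟩
    obtain ⟨P, hP, hPf, f, hf⟩ := exists_cover Y n (h1 n)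
    obtain ⟨C, g, d, hT⟩ := distinguished_cocone_triangle f
    refine isPerf_mid _ hT (isPerf_single n P) (ih C ?_ ?_ ?_)
    · intro j hj N hN u
      have hgu : g ≫ u = 0 := hV j hj N hN _
      obtain ⟨v, hv⟩ := Triangle.yoneda_exact₃ _ hT u hgu
      let i := shiftSingle P n 1 (n - 1) (by lia)
      have : i.inv ≫ v = 0 := by
        have hQ : CochainComplex.IsKProjective
            ((HomologicalComplex.single (ModuleCat.{0} A) (.up ℤ) (n - 1)).obj P) := by
          refine isKProj _ (n - 1) (fun k => ?_) (fun k hk => ?_)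
          · by_cases h : k = n - 1
            · exact Projective.of_iso
                (HomologicalComplex.singleObjXIsoOfEq (.up ℤ) (n - 1) P k h).symm ‹_›
            · exact (HomologicalComplex.isZero_single_obj_X (.up ℤ) (n - 1) P k h).projective
          · exact HomologicalComplex.isZero_single_obj_X (.up ℤ) (n - 1) P k (by lia)
        exact vanish _ (n - 1)
          (fun k hk => HomologicalComplex.isZero_single_obj_X (.up ℤ) (n - 1) P k (by lia)) _
          (fun k hk => homology_single_zero N j k (by lia)) (i.inv ≫ v)
      have hv0 : v = 0 := by
        refine (cancel_epi i.inv).1 ?_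
        rw [this]; exact comp_zero.symm
      rw [hv, hv0]; exact comp_zero
    · intro i
      exact finite_mid _ (DerivedCategory.HomologySequence.exact₃ _ hT i (i + 1) rfl)
        (h1 i) (homology_single_finite P n (i + 1))
    · intro i hi
      have hex := DerivedCategory.HomologySequence.exact₃ _ hT i (i + 1) rfl
      refine hex.isZero_X₂ ?_ ?_
      · by_cases h : i = n
        · subst h
          exact (DerivedCategory.HomologySequence.epi_homologyMap_mor₁_iff _ hT i).1 hf
        · exact (h2 i (by lia)).eq_of_src _ _
      · exact (homology_single_zero P n (i + 1) (by lia)).eq_of_tgt _ _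


abbrev top (A : Type) [Ring A] : Type := A ⧸ Module.jacobson A A

lemma exists_section [IsArtinianRing A] (S : Type) [AddCommGroup S] [Module A S]
    [IsSimpleModule A S] : ∃ (s : S →ₗ[A] top A) (p : top A →ₗ[A] S), p ∘ₗ s = LinearMap.id := by
  have : IsSemisimpleModule A (top A) :=
    (IsArtinian.isSemisimpleModule_iff_jacobson A (top A)).2 (Module.jacobson_quotient_jacobson A A)
  have := IsSimpleModule.nontrivial A S
  obtain ⟨x, hx⟩ := exists_ne (0 : S)
  have hs := IsSimpleModule.toSpanSingleton_surjective A hx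
  have hj : Module.jacobson A A ≤ LinearMap.ker (LinearMap.toSpanSingleton A S x) := by
    intro r hr
    have := IsSemisimpleModule.jacobson_le_annihilator A S hr
    simpa using Module.mem_annihilator.1 this x
  let p : top A →ₗ[A] S := Submodule.liftQ _ _ hj
  have hp : Function.Surjective p := by
    intro y
    obtain ⟨a, ha⟩ := hs y
    exact ⟨Submodule.Quotient.mk a, ha⟩
  obtain ⟨s, hs⟩ := IsSemisimpleModule.lifting_property p hp LinearMap.id
  exact ⟨s, p, hs⟩

lemma devissage [IsArtinianRing A] [IsNoetherianRing A] (Y : DerivedCategory (ModuleCat.{0} A))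
    (n : ℤ) (h : ∀ f : Y ⟶ (DerivedCategory.singleFunctor _ n).obj (ModuleCat.of A (top A)), f = 0)
    (N : Type) [AddCommGroup N] [Module A N] (hN : IsFiniteLength A N) :
    ∀ f : Y ⟶ (DerivedCategory.singleFunctor _ n).obj (ModuleCat.of A N), f = 0 := by
  induction hN with
  | @of_subsingleton M _ _ _ =>
    intro f
    have : IsZero (ModuleCat.of A M) := ModuleCat.isZero_of_subsingleton _
    exact (Functor.map_isZero (DerivedCategory.singleFunctor _ n) this).eq_of_tgt _ _
  | @of_simple_quotient M _ _ N _ _ ih =>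
    intro f
    let S : ShortComplex (ModuleCat.{0} A) := ShortComplex.mk
      (ModuleCat.ofHom N.subtype) (ModuleCat.ofHom N.mkQ) (by ext x; simp)
    have hS : S.ShortExact := ModuleCat.shortComplex_shortExact S
      (LinearMap.exact_iff.2 (by simp [S])) N.injective_subtype N.mkQ_surjective
    obtain ⟨δ, hT⟩ := triangle_single hS n
    obtain ⟨s, p, hsp⟩ := exists_section (A := A) (M ⧸ N)
    have h0 : ∀ u : Y ⟶ (DerivedCategory.singleFunctor _ n).obj (ModuleCat.of A (M ⧸ N)), u = 0 := by
      intro u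
      have e : ModuleCat.ofHom s ≫ ModuleCat.ofHom p = 𝟙 _ := by
        rw [← ModuleCat.ofHom_comp, hsp]; rfl
      have e2 := congrArg (DerivedCategory.singleFunctor _ n).map e
      rw [CategoryTheory.Functor.map_comp, CategoryTheory.Functor.map_id] at e2
      rw [← Category.comp_id u, ← e2, ← Category.assoc, h (u ≫ _), zero_comp]
    obtain ⟨g, hg⟩ := Triangle.coyoneda_exact₂ _ hT f (h0 _)
    have hg0 : g = 0 := ih g
    rw [hg, hg0]
    exact zero_comp

lemma V_of_top [IsArtinianRing A] [IsNoetherianRing A] (Y : DerivedCategory (ModuleCat.{0} A))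
    (m : ℤ) (h : ∀ n ≤ m,
      ∀ f : Y ⟶ (DerivedCategory.singleFunctor _ n).obj (ModuleCat.of A (top A)), f = 0) :
    V Y m := by
  intro n hn N hN f
  exact devissage Y n (h n hn) N
    (isFiniteLength_iff_isNoetherian_isArtinian.2 ⟨inferInstance, inferInstance⟩) f

lemma perf_vanish (Y X : DerivedCategory (ModuleCat.{0} A)) (hY : isPerf A Y) (hX : isDb A X) :
    ∃ i₀ : ℤ, ∀ i : ℤ, i₀ ≤ i → ∀ f : Y ⟶ X⟦i⟧, f = 0 := by
  obtain ⟨P, h1, -, ⟨a, b, h3⟩, ⟨e⟩⟩ := hY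
  obtain ⟨-, c, d, hX⟩ := hX
  have := isKProj P b h1 (fun n hn => h3 n (Or.inr hn))
  refine ⟨d + 1 - a, fun i hi f => ?_⟩
  rw [← cancel_epi e.hom, comp_zero]
  refine vanish P a (fun n hn => h3 n (Or.inl hn)) _ (fun j hj => ?_) _
  exact (hX (i + j) (Or.inr (by lia))).of_iso
    (((DerivedCategory.homologyFunctor (ModuleCat.{0} A) 0).shiftIso i j (i + j) rfl).app X)
end PerfAux
end

theorem statement4
    (k : Type) [Field k] (A : Type) [Ring A] [Algebra k A] [FiniteDimensional k A]
    [HasDerivedCategory.{w} (ModuleCat.{0} A)]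
    (Y : DerivedCategory (ModuleCat.{0} A)) (hY : isDb A Y) :
    isPerf A Y ↔
      ∀ X : DerivedCategory (ModuleCat.{0} A), isDb A X →
        ∃ i₀ : ℤ, ∀ i : ℤ, i₀ ≤ i → ∀ f : Y ⟶ X⟦i⟧, f = 0 := by

  have : IsArtinianRing A := IsArtinianRing.of_finite k A
  have : IsNoetherianRing A := IsNoetherianRing.of_finite k A
  refine ⟨fun h X hX => PerfAux.perf_vanish Y X h hX, fun h => ?_⟩
  obtain ⟨hf, a, b, hz⟩ := hY
  obtain ⟨i₀, hi⟩ := h ((DerivedCategory.singleFunctor _ 0).obj (ModuleCat.of A (PerfAux.top A)))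
    ⟨fun n => PerfAux.homology_single_finite _ _ _, 0, 0,
      fun n hn => PerfAux.homology_single_zero _ _ _ (by lia)⟩
  refine PerfAux.main_ind (min (-i₀) (a - 1)) (b - min (-i₀) (a - 1)).toNat Y
    (PerfAux.V_of_top Y _ fun n hn f => ?_) hf (fun i hi' => hz i (by lia))
  have e := PerfAux.shiftSingle (ModuleCat.of A (PerfAux.top A)) 0 (-n) n (by lia)
  rw [← cancel_mono e.inv, zero_comp]
  exact hi (-n) (by lia) _
end

section
/- Let f : X → Y be a morphism in D^b(A-mod) such that f ∘ g = 0 for every perfect complex P (bounded complex of finitely generated projective A-modules) and every morphism g : P → X in D^b(A-mod). Then f = 0. -/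
/-!
STATEMENT 8. Let `f : X ⟶ Y` be a morphism in `D^b(A-mod)` such that `g ≫ f = 0` for every
perfect complex `P` and every morphism `g : P ⟶ X`.  Then `f = 0`.

Here `D^b(A-mod)` is realized inside the unbounded derived category `D(A-Mod)` as the full
subcategory of complexes with bounded, finitely generated cohomology, and the perfect
complexes are the objects isomorphic to the image of a bounded complex of finitely generated
projective `A`-modules.
-/

open CategoryTheory Limits

section Helpers

open Pretriangulated Triangulated
open scoped ZeroObject

lemma aux_finite_of_exact {A : Type} [Ring A] [IsNoetherianRing A]
    (S : ShortComplex (ModuleCat.{0} A)) (hS : S.Exact)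
    (h1 : Module.Finite A S.X₁) (h3 : Module.Finite A S.X₃) : Module.Finite A S.X₂ := by
  have h := (ShortComplex.moduleCat_exact_iff_range_eq_ker S).1 hS
  have := isNoetherian_of_range_eq_ker S.f.hom S.g.hom h
  infer_instance

lemma aux_finite_of_isZero {A : Type} [Ring A] {M : ModuleCat.{0} A} (h : IsZero M) :
    Module.Finite A M := by
  have : Subsingleton M := ModuleCat.subsingleton_of_isZero h
  infer_instance

lemma aux_finite_of_iso {A : Type} [Ring A] {M N : ModuleCat.{0} A} (e : M ≅ N)
    (h : Module.Finite A M) : Module.Finite A N :=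
  Module.Finite.equiv e.toLinearEquiv

lemma aux_finite_biprod {A : Type} [Ring A] {M N : ModuleCat.{0} A}
    (h : Module.Finite A M) (h' : Module.Finite A N) :
    Module.Finite A (M ⊞ N : ModuleCat.{0} A) :=
  aux_finite_of_iso (M := ModuleCat.of A (M × N)) (ModuleCat.biprodIsoProd M N).symm
    (inferInstanceAs (Module.Finite A (M × N)))

/-- Bounded complexes of f.g. projectives. -/
def auxBP (A : Type) [Ring A] (P : CochainComplex (ModuleCat.{0} A) ℤ) : Prop :=
  (∀ n : ℤ, Projective (P.X n)) ∧ (∀ n : ℤ, Module.Finite A (P.X n)) ∧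
    (∃ a b : ℤ, ∀ n : ℤ, (n < a ∨ b < n) → IsZero (P.X n))

lemma auxBP_shift {A : Type} [Ring A] {P : CochainComplex (ModuleCat.{0} A) ℤ}
    (h : auxBP A P) (m : ℤ) : auxBP A (P⟦m⟧) := by
  obtain ⟨h1, h2, a, b, h3⟩ := h
  refine ⟨fun n => h1 (n + m), fun n => h2 (n + m), a - m, b - m, fun n hn => ?_⟩
  exact h3 (n + m) (by omega)

lemma auxBP_cone {A : Type} [Ring A] {P R : CochainComplex (ModuleCat.{0} A) ℤ}
    (hP : auxBP A P) (hR : auxBP A R) (φ : P ⟶ R) :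
    auxBP A (CochainComplex.mappingCone φ) := by
  obtain ⟨h1, h2, a, b, h3⟩ := hP
  obtain ⟨h1', h2', a', b', h3'⟩ := hR
  have e (n : ℤ) : (CochainComplex.mappingCone φ).X n ≅ P.X (n + 1) ⊞ R.X n :=
    HomologicalComplex.homotopyCofiber.XIsoBiprod φ n (n + 1) rfl
  refine ⟨fun n => ?_, fun n => ?_, min (a - 1) a', max b b', fun n hn => ?_⟩
  · have := h1 (n + 1)
    have := h1' n
    exact Projective.of_iso (e n).symm inferInstance
  · exact aux_finite_of_iso (e n).symm (aux_finite_biprod (h2 _) (h2' _))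
  · refine IsZero.of_iso ?_ (e n)
    rw [biprod_isZero_iff]
    exact ⟨h3 _ (by omega), h3' _ (by omega)⟩

lemma auxBP_single {A : Type} [Ring A] (F : ModuleCat.{0} A) (hF : Projective F)
    (hF' : Module.Finite A F) (m : ℤ) :
    auxBP A ((HomologicalComplex.single (ModuleCat.{0} A) (ComplexShape.up ℤ) m).obj F) := by
  have hz (n : ℤ) (hn : n ≠ m) : IsZero
      (((HomologicalComplex.single (ModuleCat.{0} A) (ComplexShape.up ℤ) m).obj F).X n) :=
    HomologicalComplex.isZero_single_obj_X _ _ _ _ hn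
  refine ⟨fun n => ?_, fun n => ?_, m, m, fun n hn => hz n (by omega)⟩
  · by_cases hn : n = m
    · subst hn
      exact Projective.of_iso (HomologicalComplex.singleObjXSelf _ n F).symm hF
    · exact (hz n hn).projective
  · by_cases hn : n = m
    · subst hn
      exact aux_finite_of_iso (HomologicalComplex.singleObjXSelf _ n F).symm hF'
    · exact aux_finite_of_isZero (hz n hn)

lemma auxBP_kproj {A : Type} [Ring A] {P : CochainComplex (ModuleCat.{0} A) ℤ}
    (h : auxBP A P) : P.IsKProjective := by
  obtain ⟨h1, h2, a, b, h3⟩ := h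
  have : P.IsStrictlyLE b := by
    rw [CochainComplex.isStrictlyLE_iff]
    intro i hi
    exact h3 i (Or.inr hi)
  exact CochainComplex.isKProjective_of_projective P b

lemma aux_isPerf_iff {A : Type} [Ring A] [HasDerivedCategory.{w} (ModuleCat.{0} A)]
    (X : DerivedCategory (ModuleCat.{0} A)) :
    isPerf A X ↔ ∃ P, auxBP A P ∧ Nonempty (DerivedCategory.Q.obj P ≅ X) := by
  constructor
  · rintro ⟨P, h1, h2, h3, h4⟩
    exact ⟨P, ⟨h1, h2, h3⟩, h4⟩
  · rintro ⟨P, ⟨h1, h2, h3⟩, h4⟩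
    exact ⟨P, h1, h2, h3, h4⟩

lemma aux_isPerf_shift {A : Type} [Ring A] [HasDerivedCategory.{w} (ModuleCat.{0} A)]
    {X : DerivedCategory (ModuleCat.{0} A)} (h : isPerf A X) (m : ℤ) : isPerf A (X⟦m⟧) := by
  rw [aux_isPerf_iff] at h ⊢
  obtain ⟨P, hP, ⟨e⟩⟩ := h
  exact ⟨P⟦m⟧, auxBP_shift hP m, ⟨(DerivedCategory.Q.commShiftIso m).app P ≪≫
    (shiftFunctor _ m).mapIso e⟩⟩

lemma aux_isPerf_iso {A : Type} [Ring A] [HasDerivedCategory.{w} (ModuleCat.{0} A)]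
    {X Y : DerivedCategory (ModuleCat.{0} A)} (h : isPerf A X) (e : X ≅ Y) : isPerf A Y := by
  rw [aux_isPerf_iff] at h ⊢
  obtain ⟨P, hP, ⟨e'⟩⟩ := h
  exact ⟨P, hP, ⟨e' ≪≫ e⟩⟩

lemma aux_Q_full {A : Type} [Ring A] [HasDerivedCategory.{w} (ModuleCat.{0} A)]
    {P R : CochainComplex (ModuleCat.{0} A) ℤ} (hP : auxBP A P)
    (f : DerivedCategory.Q.obj P ⟶ DerivedCategory.Q.obj R) :
    ∃ φ : P ⟶ R, DerivedCategory.Q.map φ = f := by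
  have := auxBP_kproj hP
  obtain ⟨g, hg⟩ := (CochainComplex.IsKProjective.Qh_map_bijective P
    ((HomotopyCategory.quotient _ _).obj R)).surjective
      ((DerivedCategory.quotientCompQhIso _).hom.app P ≫ f ≫
        (DerivedCategory.quotientCompQhIso _).inv.app R)
  obtain ⟨φ, rfl⟩ := (HomotopyCategory.quotient _ _).map_surjective g
  refine ⟨φ, ?_⟩
  have h := DerivedCategory.quotientCompQhIso_hom_naturality φ
  rw [hg] at h
  simp only [Category.assoc, Iso.inv_hom_id_app] at h
  rw [← cancel_epi ((DerivedCategory.quotientCompQhIso _).hom.app P), ← h]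
  exact congrArg _ (Category.comp_id _)

/-- cones -/
lemma aux_isPerf_cone {A : Type} [Ring A] [HasDerivedCategory.{w} (ModuleCat.{0} A)]
    (T : Triangle (DerivedCategory (ModuleCat.{0} A))) (hT : T ∈ distTriang _)
    (h1 : isPerf A T.obj₁) (h2 : isPerf A T.obj₂) : isPerf A T.obj₃ := by
  rw [aux_isPerf_iff] at h1 h2 ⊢
  obtain ⟨P, hP, ⟨e⟩⟩ := h1
  obtain ⟨R, hR, ⟨e'⟩⟩ := h2
  obtain ⟨φ, hφ⟩ := aux_Q_full hP (e.hom ≫ T.mor₁ ≫ e'.inv)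
  obtain ⟨i, -⟩ := exists_iso_of_arrow_iso _ _
    (DerivedCategory.mappingCone_triangle_distinguished φ) hT
    (Arrow.isoMk e e' (by
      change e.hom ≫ T.mor₁ = DerivedCategory.Q.map φ ≫ e'.hom
      simp [hφ]))
  exact ⟨_, auxBP_cone hP hR φ, ⟨Triangle.π₃.mapIso i⟩⟩

lemma aux_isPerf_ext {A : Type} [Ring A] [HasDerivedCategory.{w} (ModuleCat.{0} A)]
    (T : Triangle (DerivedCategory (ModuleCat.{0} A))) (hT : T ∈ distTriang _)
    (h1 : isPerf A T.obj₁) (h3 : isPerf A T.obj₃) : isPerf A T.obj₂ :=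
  aux_isPerf_cone _ (inv_rot_of_distTriang _ hT) (aux_isPerf_shift h3 (-1)) h1

lemma aux_epi {A : Type} [Ring A] (K : CochainComplex (ModuleCat.{0} A) ℤ) (m : ℤ)
    (h : Module.Finite A (K.homology m)) :
    ∃ (F : ModuleCat.{0} A) (_ : Projective F) (_ : Module.Finite A F)
      (ψ : (HomologicalComplex.single (ModuleCat.{0} A) (ComplexShape.up ℤ) m).obj F ⟶ K),
      Epi (HomologicalComplex.homologyMap ψ m) := by
  obtain ⟨n, p, hp⟩ := Module.Finite.exists_fin' A (K.homology m)
  let F : ModuleCat.{0} A := ModuleCat.of A (Fin n → A)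
  have hF : Projective F := ModuleCat.projective_of_free (Pi.basisFun A (Fin n))
  let p' : F ⟶ K.homology m := ModuleCat.ofHom p
  have hp' : Epi p' := (ModuleCat.epi_iff_surjective _).2 hp
  let s : F ⟶ K.cycles m := Projective.factorThru p' (K.homologyπ m)
  have hs : s ≫ K.homologyπ m = p' := Projective.factorThru_comp _ _
  let ψ := HomologicalComplex.mkHomFromSingle (K := K) (s ≫ K.iCycles m)
    (fun k _ => by simp)
  refine ⟨F, hF, inferInstanceAs (Module.Finite A (Fin n → A)), ψ, ?_⟩
  have key : (HomologicalComplex.singleObjCyclesSelfIso _ m F).inv ≫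
      HomologicalComplex.cyclesMap ψ m = s := by
    rw [← cancel_mono (K.iCycles m)]
    simp [ψ]
  have : Epi (((HomologicalComplex.singleObjCyclesSelfIso _ m F).inv ≫
      HomologicalComplex.homologyπ _ m) ≫ HomologicalComplex.homologyMap ψ m) := by
    rw [Category.assoc, HomologicalComplex.homologyπ_naturality, ← Category.assoc, key, hs]
    exact hp'
  exact epi_of_epi ((HomologicalComplex.singleObjCyclesSelfIso _ m F).inv ≫
      HomologicalComplex.homologyπ _ m) (HomologicalComplex.homologyMap ψ m)

lemma aux_epiD {A : Type} [Ring A] [HasDerivedCategory.{w} (ModuleCat.{0} A)]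
    (C : DerivedCategory (ModuleCat.{0} A)) (m : ℤ)
    (h : Module.Finite A ((DerivedCategory.homologyFunctor (ModuleCat.{0} A) m).obj C)) :
    ∃ (F : ModuleCat.{0} A) (_ : Projective F) (_ : Module.Finite A F)
      (ψ : DerivedCategory.Q.obj
        ((HomologicalComplex.single (ModuleCat.{0} A) (ComplexShape.up ℤ) m).obj F) ⟶ C),
      Epi ((DerivedCategory.homologyFunctor (ModuleCat.{0} A) m).map ψ) := by
  let K := DerivedCategory.Q.objPreimage C
  let e : DerivedCategory.Q.obj K ≅ C := DerivedCategory.Q.objObjPreimageIso C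
  have hK : Module.Finite A (K.homology m) :=
    aux_finite_of_iso ((DerivedCategory.homologyFunctor _ m).mapIso e.symm ≪≫
      (DerivedCategory.homologyFunctorFactors _ m).app K) h
  obtain ⟨F, h1, h2, ψ, h3⟩ := aux_epi K m hK
  refine ⟨F, h1, h2, DerivedCategory.Q.map ψ ≫ e.hom, ?_⟩
  have : Epi ((DerivedCategory.homologyFunctor (ModuleCat.{0} A) m).map
      (DerivedCategory.Q.map ψ)) :=
    ((MorphismProperty.epimorphisms _).arrow_mk_iso_iff
      (Arrow.isoMk ((DerivedCategory.homologyFunctorFactors _ m).app _)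
        ((DerivedCategory.homologyFunctorFactors _ m).app _)
        ((DerivedCategory.homologyFunctorFactors _ m).hom.naturality ψ).symm)).2 h3
  rw [Functor.map_comp]
  exact epi_comp _ _

lemma aux_finite_homology {A : Type} [Ring A] [HasDerivedCategory.{w} (ModuleCat.{0} A)]
    (F : ModuleCat.{0} A) (hF : Module.Finite A F) (m n : ℤ) :
    Module.Finite A ((DerivedCategory.homologyFunctor (ModuleCat.{0} A) n).obj
      (DerivedCategory.Q.obj
        ((HomologicalComplex.single (ModuleCat.{0} A) (ComplexShape.up ℤ) m).obj F))) := by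
  by_cases hn : n = m
  · subst hn
    exact aux_finite_of_iso (((DerivedCategory.homologyFunctorFactors _ n).app _ ≪≫
      HomologicalComplex.singleObjHomologySelfIso _ n F).symm) hF
  · apply aux_finite_of_isZero
    refine IsZero.of_iso ?_ ((DerivedCategory.homologyFunctorFactors _ n).app _)
    exact HomologicalComplex.isZero_single_obj_homology _ _ _ _ hn

lemma aux_approx {A : Type} [Ring A] [IsNoetherianRing A]
    [HasDerivedCategory.{w} (ModuleCat.{0} A)]
    (X : DerivedCategory (ModuleCat.{0} A))
    (hX : ∀ n, Module.Finite A ((DerivedCategory.homologyFunctor (ModuleCat.{0} A) n).obj X))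
    (b : ℤ) (hb : X.IsLE b) (d : ℕ) :
    ∃ (P C : DerivedCategory (ModuleCat.{0} A)) (u : P ⟶ X) (v : X ⟶ C) (w : C ⟶ P⟦(1 : ℤ)⟧),
      Triangle.mk u v w ∈ distTriang _ ∧ isPerf A P ∧
      (∀ n, Module.Finite A ((DerivedCategory.homologyFunctor (ModuleCat.{0} A) n).obj C)) ∧
      C.IsLE (b - d) := by
  induction d with
  | zero =>
    refine ⟨0, X, 0, 𝟙 X, 0, contractible_distinguished₁ X, ?_, hX, by simpa using hb⟩
    refine ⟨0, fun n => ?_, fun n => ?_, ⟨0, 0, fun n _ => ?_⟩, ⟨?_⟩⟩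
    · exact (((HomologicalComplex.eval _ _ n).map_isZero (isZero_zero _))).projective
    · exact aux_finite_of_isZero ((HomologicalComplex.eval _ _ n).map_isZero (isZero_zero _))
    · exact (HomologicalComplex.eval _ _ n).map_isZero (isZero_zero _)
    · exact (DerivedCategory.Q.map_isZero (isZero_zero _)).iso (isZero_zero _)
  | succ d ih =>
    obtain ⟨P, C, u, v, w, hT, hP, hC, hCle⟩ := ih
    set m := b - d with hm
    obtain ⟨F, hF, hF', ψ, hψ⟩ := aux_epiD C m (hC m)
    obtain ⟨C', v', w', hT'⟩ := distinguished_cocone_triangle ψ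
    obtain ⟨P', u'', w'', hT''⟩ := distinguished_cocone_triangle₁ (v ≫ v')
    have o := someOctahedron' rfl hT hT' hT''
    have hS := auxBP_single F hF hF' m
    refine ⟨P', C', u'', v ≫ v', w'', hT'', ?_, ?_, ?_⟩
    · exact aux_isPerf_ext _ o.mem hP ((aux_isPerf_iff _).2 ⟨_, hS, ⟨Iso.refl _⟩⟩)
    · intro n
      exact aux_finite_of_exact _ (DerivedCategory.HomologySequence.exact₃ _ hT' n (n + 1) rfl)
        (hC n) (aux_finite_homology F hF' m (n + 1))
    · rw [DerivedCategory.isLE_iff]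
      intro i hi
      have h3 := DerivedCategory.HomologySequence.exact₃ _ hT' i (i + 1) rfl
      have hz : IsZero ((DerivedCategory.homologyFunctor (ModuleCat.{0} A) (i + 1)).obj
          (DerivedCategory.Q.obj
        ((HomologicalComplex.single (ModuleCat.{0} A) (ComplexShape.up ℤ) m).obj F))) := by
        refine IsZero.of_iso ?_ ((DerivedCategory.homologyFunctorFactors _ (i + 1)).app _)
        exact HomologicalComplex.isZero_single_obj_homology _ _ _ _ (by push_cast at hi; omega)
      refine h3.isZero_X₂ ?_ (hz.eq_of_tgt _ _)
      by_cases him : i = m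
      · subst him
        exact (DerivedCategory.HomologySequence.epi_homologyMap_mor₁_iff _ hT' _).1 hψ
      · exact (DerivedCategory.isZero_of_isLE C m i (by push_cast at hi; omega)).eq_of_src _ _

end Helpers

theorem statement8
    (k : Type) [Field k] (A : Type) [Ring A] [Algebra k A] [FiniteDimensional k A]
    [HasDerivedCategory.{w} (ModuleCat.{0} A)]
    (X Y : DerivedCategory (ModuleCat.{0} A)) (hX : isDb A X) (hY : isDb A Y)
    (f : X ⟶ Y)
    (hf : ∀ P : DerivedCategory (ModuleCat.{0} A), isPerf A P →
      ∀ g : P ⟶ X, g ≫ f = 0) :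
    f = 0 := by
  have : IsNoetherianRing A := isNoetherian_of_tower k inferInstance
  obtain ⟨hX1, a, b, hX2⟩ := hX
  obtain ⟨-, a', b', hY2⟩ := hY
  have hXle : X.IsLE b := (DerivedCategory.isLE_iff X b).2 fun i hi => hX2 i (Or.inr hi)
  have hYge : Y.IsGE a' := (DerivedCategory.isGE_iff Y a').2 fun i hi => hY2 i (Or.inl hi)
  obtain ⟨P, C, u, v, w, hT, hP, -, hC⟩ := aux_approx X hX1 b hXle (b - a' + 1).toNat
  obtain ⟨g, hg⟩ := Pretriangulated.Triangle.yoneda_exact₂ _ hT f (hf P hP u)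
  have hg0 : g = 0 := DerivedCategory.TStructure.t.zero_of_isLE_of_isGE g
    (b - (b - a' + 1).toNat) a' (by omega) hC hYge
  rw [hg, hg0]
  exact comp_zero
end
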